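/- Let F ⊆ E be a flat, R a face of 𝒜_F, and 𝒻 : F = F_0 ⊊ F_1 ⊊ ⋯ ⊊ F_k = E a flag of flats based at F of length k. Then the dimension of the linear span of the cone C^{(F,R)}_𝒻 in W_{F,R} equals d + k − finrank(span{a_e : e ∈ F^0(R)}), i.e. dim C^{(F,R)}_𝒻 = d + ℓ(𝒻) − codim R. (Dimension formula of Theorem 6.1 for the cones of Trop(𝔐_𝒜).) -/

import Mathlib

open Set Submodule

noncomputable section

variable {E : Type*} [Fintype E] [DecidableEq E]
variable {M : Type*} [NormedAddCommGroup M] [NormedSpace ℝ M] [FiniteDimensional ℝ M]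

/-- The positive closed halfspace `H_e^+` of the hyperplane `H_e`. -/
def Hplus (a : E → (M →ₗ[ℝ] ℝ)) (r : E → ℝ) (e : E) : Set M := {m | a e m + r e ≤ 0}

/-- The negative closed halfspace `H_e^-` of the hyperplane `H_e`. -/
def Hminus (a : E → (M →ₗ[ℝ] ℝ)) (r : E → ℝ) (e : E) : Set M := {m | 0 ≤ a e m + r e}

/-- `R` is a face of the localization `𝒜_S`: a nonempty fiber of the sign map
`M → SignType^S`, `m ↦ (sign (a e m + r e))_{e ∈ S}`. -/
def IsFace (a : E → (M →ₗ[ℝ] ℝ)) (r : E → ℝ) (S : Set E) (R : Set M) : Prop :=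
  ∃ m₀ : M, R = {m : M | ∀ e ∈ S, SignType.sign (a e m + r e) = SignType.sign (a e m₀ + r e)}

/-- `S^+(R)`: the elements `e ∈ S` with `R ⊆ H_e^+`. -/
def posSet (a : E → (M →ₗ[ℝ] ℝ)) (r : E → ℝ) (S : Set E) (R : Set M) : Set E :=
  {e ∈ S | R ⊆ Hplus a r e}

/-- `S^-(R)`: the elements `e ∈ S` with `R ⊆ H_e^-`. -/
def negSet (a : E → (M →ₗ[ℝ] ℝ)) (r : E → ℝ) (S : Set E) (R : Set M) : Set E :=
  {e ∈ S | R ⊆ Hminus a r e}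

/-- `S^0(R) = S^+(R) ∩ S^-(R)`. -/
def zeroSet (a : E → (M →ₗ[ℝ] ℝ)) (r : E → ℝ) (S : Set E) (R : Set M) : Set E :=
  posSet a r S R ∩ negSet a r S R

/-- The linear map `(E → ℝ) → N` sending the basis vector `δ_e` to `a_e`. -/
def toN (a : E → (M →ₗ[ℝ] ℝ)) : (E → ℝ) →ₗ[ℝ] (M →ₗ[ℝ] ℝ) :=
  Fintype.linearCombination ℝ a

/-- `Λ`, the kernel of `(E → ℝ) → N`. -/
def Lam (a : E → (M →ₗ[ℝ] ℝ)) : Submodule ℝ (E → ℝ) := LinearMap.ker (toN a)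

/-- The antidiagonal embedding `∇ : x ↦ (x, -x)`. -/
def nabla : (E → ℝ) →ₗ[ℝ] (E → ℝ) × (E → ℝ) :=
  LinearMap.prod LinearMap.id (-LinearMap.id)

/-- `∇(Λ)`. -/
def nabLam (a : E → (M →ₗ[ℝ] ℝ)) : Submodule ℝ ((E → ℝ) × (E → ℝ)) :=
  (Lam a).map nabla

/-- The Lawrence cocharacter space `Ñ = ((E → ℝ) × (E → ℝ))/∇(Λ)`. -/
abbrev tildeN (a : E → (M →ₗ[ℝ] ℝ)) : Type _ := ((E → ℝ) × (E → ℝ)) ⧸ nabLam a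

/-- `ρ_e^+`, the image of `(δ_e, 0)` in `Ñ`. -/
def rhoP (a : E → (M →ₗ[ℝ] ℝ)) (e : E) : tildeN a :=
  Submodule.Quotient.mk (Pi.single e 1, 0)

/-- `ρ_e^-`, the image of `(0, δ_e)` in `Ñ`. -/
def rhoM (a : E → (M →ₗ[ℝ] ℝ)) (e : E) : tildeN a :=
  Submodule.Quotient.mk (0, Pi.single e 1)

/-- The cone `σ_{S,R} ⊆ Ñ` generated by `{ρ_e^+ : e ∈ S^+(R)} ∪ {ρ_f^- : f ∈ S^-(R)}`
together with `0`: the set of all nonnegative linear combinations of these generators. -/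
def sigmaCone (a : E → (M →ₗ[ℝ] ℝ)) (r : E → ℝ) (S : Set E) (R : Set M) : Set (tildeN a) :=
  {v | ∃ c d : E → ℝ, (∀ e, 0 ≤ c e) ∧ (∀ e, 0 ≤ d e) ∧
    v = ∑ e, (posSet a r S R).indicator c e • rhoP a e
      + ∑ e, (negSet a r S R).indicator d e • rhoM a e}

/-- The addition map `(x, y) ↦ x + y` on `(E → ℝ) × (E → ℝ)`. -/
def addMap (E : Type*) [Fintype E] : ((E → ℝ) × (E → ℝ)) →ₗ[ℝ] (E → ℝ) :=
  LinearMap.fst ℝ (E → ℝ) (E → ℝ) + LinearMap.snd ℝ (E → ℝ) (E → ℝ)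

lemma nabLam_le_ker_addMap (a : E → (M →ₗ[ℝ] ℝ)) :
    nabLam a ≤ LinearMap.ker (addMap E) := by
  rintro v ⟨x, hx, rfl⟩
  simp [addMap, nabla]

/-- The map `Φ̄ : Ñ → (E → ℝ)` induced by `(x, y) ↦ x + y`; it satisfies
`Φ̄(ρ_e^+) = Φ̄(ρ_e^-) = δ_e`. -/
def Phibar (a : E → (M →ₗ[ℝ] ℝ)) : tildeN a →ₗ[ℝ] (E → ℝ) :=
  (nabLam a).liftQ (addMap E) (nabLam_le_ker_addMap a)

lemma Phibar_rhoP (a : E → (M →ₗ[ℝ] ℝ)) (e : E) :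
    Phibar a (rhoP a e) = Pi.single e 1 := by
  simp [Phibar, rhoP, addMap]

lemma Phibar_rhoM (a : E → (M →ₗ[ℝ] ℝ)) (e : E) :
    Phibar a (rhoM a e) = Pi.single e 1 := by
  simp [Phibar, rhoM, addMap]

/-- `ℝ^F`, the span of the coordinate vectors `δ_e` for `e ∈ F`. -/
def RF (E : Type*) [Fintype E] [DecidableEq E] (F : Set E) : Submodule ℝ (E → ℝ) :=
  Submodule.span ℝ ((fun e => Pi.single e (1 : ℝ)) '' F)

/-- The linear span of the cone `σ_{F,R}` in `Ñ`. -/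
def spanSigma (a : E → (M →ₗ[ℝ] ℝ)) (r : E → ℝ) (F : Set E) (R : Set M) :
    Submodule ℝ (tildeN a) :=
  Submodule.span ℝ (sigmaCone a r F R)

/-- `W_{F,R} = Ñ / span(σ_{F,R})`. -/
abbrev Wspace (a : E → (M →ₗ[ℝ] ℝ)) (r : E → ℝ) (F : Set E) (R : Set M) : Type _ :=
  tildeN a ⧸ spanSigma a r F R

/-- The quotient map `π_{F,R} : Ñ → W_{F,R}`. -/
def piFR (a : E → (M →ₗ[ℝ] ℝ)) (r : E → ℝ) (F : Set E) (R : Set M) :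
    tildeN a →ₗ[ℝ] Wspace a r F R :=
  (spanSigma a r F R).mkQ

lemma spanSigma_le_ker (a : E → (M →ₗ[ℝ] ℝ)) (r : E → ℝ) (F : Set E) (R : Set M) :
    spanSigma a r F R ≤ LinearMap.ker ((RF E F).mkQ ∘ₗ Phibar a) := by
  rw [spanSigma, Submodule.span_le]
  rintro v ⟨c, d, hc, hd, rfl⟩
  simp only [SetLike.mem_coe, LinearMap.mem_ker, LinearMap.comp_apply]
  rw [Submodule.mkQ_apply, Submodule.Quotient.mk_eq_zero, map_add, map_sum, map_sum]
  simp only [map_smul]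
  apply Submodule.add_mem
  · apply Submodule.sum_mem
    intro e _
    by_cases he : e ∈ posSet a r F R
    · rw [Set.indicator_of_mem he]
      exact Submodule.smul_mem _ _
        (by rw [Phibar_rhoP]; exact Submodule.subset_span ⟨e, he.1, rfl⟩)
    · rw [Set.indicator_of_notMem he, zero_smul]
      exact Submodule.zero_mem _
  · apply Submodule.sum_mem
    intro e _
    by_cases he : e ∈ negSet a r F R
    · rw [Set.indicator_of_mem he]
      exact Submodule.smul_mem _ _
        (by rw [Phibar_rhoM]; exact Submodule.subset_span ⟨e, he.1, rfl⟩)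
    · rw [Set.indicator_of_notMem he, zero_smul]
      exact Submodule.zero_mem _

/-- The induced surjection `Φ̄_{F,R} : W_{F,R} → (E → ℝ)/ℝ^F`. -/
def PhibarFR (a : E → (M →ₗ[ℝ] ℝ)) (r : E → ℝ) (F : Set E) (R : Set M) :
    Wspace a r F R →ₗ[ℝ] ((E → ℝ) ⧸ RF E F) :=
  (spanSigma a r F R).liftQ ((RF E F).mkQ ∘ₗ Phibar a) (spanSigma_le_ker a r F R)

/-- `F ⊆ E` is a flat of the configuration `a`. -/
def IsFlat (a : E → (M →ₗ[ℝ] ℝ)) (F : Set E) : Prop :=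
  F = {e : E | a e ∈ Submodule.span ℝ (a '' F)}

/-- The Bergman cone of a flag `𝒻 : F = F_0 ⊊ F_1 ⊊ ⋯ ⊊ F_k = E`:
`{c_1 δ_{F_1} + ⋯ + c_{k-1} δ_{F_{k-1}} + c δ_E : c_1, …, c_{k-1} ≥ 0, c ∈ ℝ} ⊆ ℝ^E`. -/
def bergCone {E : Type*} [Fintype E] (k : ℕ) (flag : Fin (k + 1) → Set E) : Set (E → ℝ) :=
  {v | ∃ c : Fin (k + 1) → ℝ, c 0 = 0 ∧ (∀ i : Fin (k + 1), 0 < i.val → i.val < k → 0 ≤ c i) ∧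
    v = ∑ i : Fin (k + 1), c i • (flag i).indicator (1 : E → ℝ)}

/-- The cone `C^{(F,R)}_𝒻 = Φ̄_{F,R}⁻¹(β_𝒻) ⊆ W_{F,R}` of `Trop(𝔐_𝒜)`, where
`β_𝒻 ⊆ (E → ℝ)/ℝ^F` is the image of the Bergman cone of the flag `𝒻`. -/
def Ccone (a : E → (M →ₗ[ℝ] ℝ)) (r : E → ℝ) (F : Set E) (R : Set M)
    (k : ℕ) (flag : Fin (k + 1) → Set E) : Set (Wspace a r F R) :=
  PhibarFR a r F R ⁻¹' ((RF E F).mkQ '' bergCone k flag)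


lemma aux_finrank_comap {V W : Type*} [AddCommGroup V] [Module ℝ V] [AddCommGroup W] [Module ℝ W]
    [FiniteDimensional ℝ V] (f : V →ₗ[ℝ] W) (hf : Function.Surjective f) (S : Submodule ℝ W) :
    Module.finrank ℝ (S.comap f) = Module.finrank ℝ S + Module.finrank ℝ (LinearMap.ker f) := by
  have h := LinearMap.finrank_range_add_finrank_ker (f.domRestrict (S.comap f))
  rw [← h, LinearMap.range_domRestrict, Submodule.map_comap_eq_of_surjective hf,
    LinearMap.ker_domRestrict]
  congr 1
  exact LinearEquiv.finrank_eq
    (Submodule.submoduleOfEquivOfLe (p := LinearMap.ker f) (q := S.comap f) (by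
      intro x hx
      rw [LinearMap.mem_ker] at hx
      simp [hx]))

lemma aux_mem_RF {E : Type*} [Fintype E] [DecidableEq E] (F : Set E) (z : E → ℝ) :
    z ∈ RF E F ↔ ∀ e, e ∉ F → z e = 0 := by
  constructor
  · intro hz
    induction hz using Submodule.span_induction with
    | mem x hx =>
      obtain ⟨f, hf, rfl⟩ := hx
      intro e he
      exact Pi.single_eq_of_ne (by rintro rfl; exact he hf) _
    | zero => simp
    | add x y _ _ hx hy => intro e he; simp [hx e he, hy e he]
    | smul c x _ hx => intro e he; simp [hx e he]
  · intro h
    rw [← Finset.univ_sum_single z]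
    refine Submodule.sum_mem _ fun e _ => ?_
    by_cases he : e ∈ F
    · have : Pi.single e (z e) = z e • (Pi.single e (1 : ℝ) : E → ℝ) := by
        rw [← Pi.single_smul]; simp
      rw [this]
      exact Submodule.smul_mem _ _ (Submodule.subset_span ⟨e, he, rfl⟩)
    · rw [h e he]; simp

lemma aux_span_berg {E : Type*} [Fintype E] (k : ℕ) (flag : Fin (k + 1) → Set E) :
    Submodule.span ℝ (bergCone k flag) =
      Submodule.span ℝ (Set.range fun i : Fin k => (flag i.succ).indicator (1 : E → ℝ)) := by
  apply le_antisymm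
  · rw [Submodule.span_le]
    rintro v ⟨c, hc0, -, rfl⟩
    rw [Fin.sum_univ_succ, hc0, zero_smul, zero_add]
    exact Submodule.sum_mem _ fun i _ =>
      Submodule.smul_mem _ _ (Submodule.subset_span ⟨i, rfl⟩)
  · rw [Submodule.span_le]
    rintro v ⟨i, rfl⟩
    apply Submodule.subset_span
    refine ⟨Pi.single i.succ 1, ?_, ?_, ?_⟩
    · exact Pi.single_eq_of_ne (Fin.succ_ne_zero i).symm _
    · intro j _ _
      by_cases h : j = i.succ
      · subst h; simp
      · rw [Pi.single_eq_of_ne h]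
    · simp [Pi.single_apply]

lemma aux_finrank_berg {E : Type*} [Fintype E] [DecidableEq E] (F : Set E) (k : ℕ)
    (flag : Fin (k + 1) → Set E) (hmono : StrictMono flag) (h0 : flag 0 = F) :
    Module.finrank ℝ (Submodule.span ℝ ((RF E F).mkQ '' bergCone k flag)) = k := by
  rw [Submodule.span_image, aux_span_berg, ← Submodule.span_image, ← Set.range_comp]
  have hli : LinearIndependent ℝ
      ((RF E F).mkQ ∘ fun i : Fin k => (flag i.succ).indicator (1 : E → ℝ)) := by
    rw [Fintype.linearIndependent_iff]
    intro c hc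
    have hz : (∑ i : Fin k, c i • (flag i.succ).indicator (1 : E → ℝ)) ∈ RF E F := by
      rw [← Submodule.Quotient.mk_eq_zero, ← Submodule.mkQ_apply, map_sum]
      simpa using hc
    rw [aux_mem_RF] at hz
    by_contra! hne
    obtain ⟨i, hi, hmax⟩ : ∃ i, c i ≠ 0 ∧ ∀ j, i < j → c j = 0 := by
      obtain ⟨i, hi⟩ := (Set.toFinite {i | c i ≠ 0}).exists_maximal hne
      refine ⟨i, hi.1, fun j hj => ?_⟩
      by_contra h
      exact absurd (hi.2 h hj.le) (not_le.mpr hj)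
    obtain ⟨e, he1, he2⟩ := Set.exists_of_ssubset (hmono (Fin.castSucc_lt_succ (i := i)))
    have heF : e ∉ F := by
      intro h
      rw [← h0] at h
      exact he2 (hmono.monotone (Fin.zero_le _) h)
    have := hz e heF
    rw [Finset.sum_apply, Finset.sum_eq_single i] at this
    · simp [he1] at this
      exact hi this
    · intro j _ hj
      rcases lt_or_gt_of_ne hj with h | h
      · have : e ∉ flag j.succ := fun h' => he2 (hmono.monotone (by
          rw [Fin.le_def]; simpa using h) h')
        simp [this]
      · simp [hmax j h]
    · simp
  rw [finrank_span_eq_card hli, Fintype.card_fin]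

section
variable {E : Type*} [Fintype E] [DecidableEq E]
variable {M : Type*} [NormedAddCommGroup M] [NormedSpace ℝ M] [FiniteDimensional ℝ M]

lemma aux_rhoP_mem (a : E → (M →ₗ[ℝ] ℝ)) (r : E → ℝ) (F : Set E) (R : Set M) (e : E)
    (he : e ∈ posSet a r F R) : rhoP a e ∈ spanSigma a r F R := by
  apply Submodule.subset_span
  refine ⟨Pi.single e 1, 0, ?_, by simp, ?_⟩
  · intro f; by_cases h : f = e
    · subst h; simp
    · rw [Pi.single_eq_of_ne h]
  · rw [Finset.sum_eq_single e]
    · simp [he]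
    · intro f _ hf
      simp [Set.indicator_apply, hf]
    · simp

lemma aux_rhoM_mem (a : E → (M →ₗ[ℝ] ℝ)) (r : E → ℝ) (F : Set E) (R : Set M) (e : E)
    (he : e ∈ negSet a r F R) : rhoM a e ∈ spanSigma a r F R := by
  apply Submodule.subset_span
  refine ⟨0, Pi.single e 1, by simp, ?_, ?_⟩
  · intro f; by_cases h : f = e
    · subst h; simp
    · rw [Pi.single_eq_of_ne h]
  · rw [Finset.sum_eq_single (s := Finset.univ)
      (f := fun x => (negSet a r F R).indicator (Pi.single e 1 : E → ℝ) x • rhoM a x) e]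
    · simp [he]
    · intro f _ hf
      simp [Set.indicator_apply, hf]
    · simp

lemma aux_cover (a : E → (M →ₗ[ℝ] ℝ)) (r : E → ℝ) (F : Set E) (R : Set M)
    (hR : IsFace a r F R) (e : E) (he : e ∈ F) : e ∈ posSet a r F R ∨ e ∈ negSet a r F R := by
  obtain ⟨m₀, rfl⟩ := hR
  rcases le_total (a e m₀ + r e) 0 with h | h
  · left
    refine ⟨he, fun m hm => ?_⟩
    have h1 := hm e he
    by_contra h2
    simp only [Hplus, Set.mem_setOf_eq, not_le] at h2
    rw [sign_pos h2, eq_comm, sign_eq_one_iff] at h1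
    linarith
  · right
    refine ⟨he, fun m hm => ?_⟩
    have h1 := hm e he
    by_contra h2
    simp only [Hminus, Set.mem_setOf_eq, not_le] at h2
    rw [sign_neg h2, eq_comm, sign_eq_neg_one_iff] at h1
    linarith

/-- Sum of the coordinates in `F^+ \ F^-`, weighted by `a`. -/
def auxT (a : E → (M →ₗ[ℝ] ℝ)) (P : Set E) : ((E → ℝ) × (E → ℝ)) →ₗ[ℝ] (M →ₗ[ℝ] ℝ) :=
  toN a ∘ₗ LinearMap.fst ℝ _ _ -
    toN (P.indicator a) ∘ₗ addMap E

lemma auxT_le (a : E → (M →ₗ[ℝ] ℝ)) (P : Set E) : nabLam a ≤ LinearMap.ker (auxT a P) := by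
  rintro v ⟨x, hx, rfl⟩
  have hx' : toN a x = 0 := hx
  simp [auxT, addMap, nabla, hx']

def auxT1 (a : E → (M →ₗ[ℝ] ℝ)) (P : Set E) : tildeN a →ₗ[ℝ] (M →ₗ[ℝ] ℝ) :=
  (nabLam a).liftQ (auxT a P) (auxT_le a P)

lemma toN_single (a : E → (M →ₗ[ℝ] ℝ)) (e : E) : toN a (Pi.single e 1) = a e := by
  simp [toN, Fintype.linearCombination_apply_single]

lemma auxT1_rhoP (a : E → (M →ₗ[ℝ] ℝ)) (P : Set E) (e : E) :
    auxT1 a P (rhoP a e) = a e - P.indicator a e := by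
  simp [auxT1, rhoP, auxT, addMap, toN_single]

lemma auxT1_rhoM (a : E → (M →ₗ[ℝ] ℝ)) (P : Set E) (e : E) :
    auxT1 a P (rhoM a e) = - P.indicator a e := by
  simp [auxT1, rhoM, auxT, addMap, toN_single]

abbrev auxA (a : E → (M →ₗ[ℝ] ℝ)) (r : E → ℝ) (F : Set E) (R : Set M) :
    Submodule ℝ (M →ₗ[ℝ] ℝ) := Submodule.span ℝ (a '' zeroSet a r F R)

abbrev auxP (a : E → (M →ₗ[ℝ] ℝ)) (r : E → ℝ) (F : Set E) (R : Set M) : Set E :=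
  posSet a r F R \ negSet a r F R

lemma auxT1_le (a : E → (M →ₗ[ℝ] ℝ)) (r : E → ℝ) (F : Set E) (R : Set M) :
    spanSigma a r F R ≤
      LinearMap.ker ((auxA a r F R).mkQ ∘ₗ auxT1 a (auxP a r F R)) := by
  rw [spanSigma, Submodule.span_le]
  rintro v ⟨c, d, hc, hd, rfl⟩
  simp only [SetLike.mem_coe, LinearMap.mem_ker, LinearMap.comp_apply]
  rw [Submodule.mkQ_apply, Submodule.Quotient.mk_eq_zero, map_add, map_sum, map_sum]
  simp only [map_smul]
  apply Submodule.add_mem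
  · apply Submodule.sum_mem
    intro e _
    by_cases he : e ∈ posSet a r F R
    · refine Submodule.smul_mem _ _ ?_
      rw [auxT1_rhoP]
      by_cases he' : e ∈ negSet a r F R
      · rw [Set.indicator_of_notMem (fun h => h.2 he'), sub_zero]
        exact Submodule.subset_span ⟨e, ⟨he, he'⟩, rfl⟩
      · rw [Set.indicator_of_mem (show e ∈ auxP a r F R from ⟨he, he'⟩), sub_self]
        exact Submodule.zero_mem _
    · rw [Set.indicator_of_notMem he, zero_smul]
      exact Submodule.zero_mem _
  · apply Submodule.sum_mem
    intro e _
    by_cases he : e ∈ negSet a r F R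
    · refine Submodule.smul_mem _ _ ?_
      rw [auxT1_rhoM, Set.indicator_of_notMem (fun h => h.2 he), neg_zero]
      exact Submodule.zero_mem _
    · rw [Set.indicator_of_notMem he, zero_smul]
      exact Submodule.zero_mem _

def auxG (a : E → (M →ₗ[ℝ] ℝ)) (r : E → ℝ) (F : Set E) (R : Set M) :
    Wspace a r F R →ₗ[ℝ] ((M →ₗ[ℝ] ℝ) ⧸ auxA a r F R) :=
  (spanSigma a r F R).liftQ _ (auxT1_le a r F R)

lemma aux_lift (a : E → (M →ₗ[ℝ] ℝ)) (r : E → ℝ) (F : Set E) (R : Set M)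
    (hR : IsFace a r F R) (z : E → ℝ) (hz : z ∈ RF E F) :
    ∃ s ∈ spanSigma a r F R, Phibar a s = z := by
  induction hz using Submodule.span_induction with
  | mem x hx =>
    obtain ⟨e, he, rfl⟩ := hx
    rcases aux_cover a r F R hR e he with h | h
    · exact ⟨_, aux_rhoP_mem a r F R e h, Phibar_rhoP a e⟩
    · exact ⟨_, aux_rhoM_mem a r F R e h, Phibar_rhoM a e⟩
  | zero => exact ⟨0, Submodule.zero_mem _, map_zero _⟩
  | add x y _ _ hx hy =>
    obtain ⟨s, hs, rfl⟩ := hx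
    obtain ⟨t, ht, rfl⟩ := hy
    exact ⟨s + t, Submodule.add_mem _ hs ht, map_add _ _ _⟩
  | smul c x _ hx =>
    obtain ⟨s, hs, rfl⟩ := hx
    exact ⟨c • s, Submodule.smul_mem _ _ hs, map_smul _ _ _⟩

lemma aux_liftA (a : E → (M →ₗ[ℝ] ℝ)) (r : E → ℝ) (F : Set E) (R : Set M)
    (n : M →ₗ[ℝ] ℝ) (hn : n ∈ auxA a r F R) :
    ∃ x : E → ℝ, toN a x = n ∧
      (Submodule.Quotient.mk (x, -x) : tildeN a) ∈ spanSigma a r F R := by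
  induction hn using Submodule.span_induction with
  | mem x hx =>
    obtain ⟨e, he, rfl⟩ := hx
    refine ⟨Pi.single e 1, toN_single a e, ?_⟩
    have := Submodule.sub_mem _ (aux_rhoP_mem a r F R e he.1) (aux_rhoM_mem a r F R e he.2)
    rw [rhoP, rhoM, ← Submodule.Quotient.mk_sub] at this
    simpa using this
  | zero =>
    refine ⟨0, map_zero _, ?_⟩
    rw [neg_zero, ← Prod.zero_eq_mk, Submodule.Quotient.mk_zero]
    exact Submodule.zero_mem _
  | add x y _ _ hx hy =>
    obtain ⟨s, rfl, hs⟩ := hx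
    obtain ⟨t, rfl, ht⟩ := hy
    refine ⟨s + t, map_add _ _ _, ?_⟩
    have := Submodule.add_mem _ hs ht
    rw [← Submodule.Quotient.mk_add] at this
    convert this using 2
    simp [add_comm]
  | smul c x _ hx =>
    obtain ⟨s, rfl, hs⟩ := hx
    refine ⟨c • s, map_smul _ _ _, ?_⟩
    have := Submodule.smul_mem _ c hs
    rw [← Submodule.Quotient.mk_smul] at this
    convert this using 2
    simp

lemma aux_inj (a : E → (M →ₗ[ℝ] ℝ)) (r : E → ℝ) (F : Set E) (R : Set M)
    (hR : IsFace a r F R) (w : Wspace a r F R) (h1 : PhibarFR a r F R w = 0)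
    (h2 : auxG a r F R w = 0) : w = 0 := by
  obtain ⟨t, rfl⟩ := Submodule.mkQ_surjective _ w
  have h1' : Phibar a t ∈ RF E F := by
    simpa [PhibarFR] using h1
  obtain ⟨s, hs, hst⟩ := aux_lift a r F R hR _ h1'
  obtain ⟨u, rfl⟩ : ∃ u, t = s + u := ⟨t - s, by abel⟩
  have hu : Phibar a u = 0 := by simpa using hst
  have hs0 : (spanSigma a r F R).mkQ s = 0 := by simpa using hs
  rw [map_add, hs0, zero_add] at h2 ⊢
  obtain ⟨⟨x, y⟩, rfl⟩ := Submodule.mkQ_surjective _ u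
  have hxy : x + y = 0 := by simpa [Phibar, addMap] using hu
  obtain rfl : y = -x := by rw [eq_neg_iff_add_eq_zero, add_comm]; exact hxy
  have h2' : toN a x ∈ auxA a r F R := by
    rw [← Submodule.Quotient.mk_eq_zero]
    simpa [auxG, auxT1, auxT, addMap] using h2
  obtain ⟨x', hx', hmem⟩ := aux_liftA a r F R _ h2'
  have heq : (Submodule.Quotient.mk (x, -x) : tildeN a) = Submodule.Quotient.mk (x', -x') := by
    rw [Submodule.Quotient.eq]
    refine ⟨x - x', ?_, ?_⟩
    · change toN a (x - x') = 0
      rw [map_sub, hx', sub_self]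
    · simp [nabla]
      abel
  rw [← heq] at hmem
  simpa using hmem

lemma aux_surj_Phi (a : E → (M →ₗ[ℝ] ℝ)) (r : E → ℝ) (F : Set E) (R : Set M) :
    Function.Surjective (PhibarFR a r F R) := by
  intro q
  obtain ⟨z, rfl⟩ := Submodule.mkQ_surjective _ q
  refine ⟨Submodule.Quotient.mk (Submodule.Quotient.mk (z, 0)), ?_⟩
  simp [PhibarFR, Phibar, addMap]

lemma aux_surj_toN (a : E → (M →ₗ[ℝ] ℝ)) (hspan : Submodule.span ℝ (Set.range a) = ⊤) :
    Function.Surjective (toN a) := by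
  rw [← LinearMap.range_eq_top, toN, Fintype.range_linearCombination, hspan]

lemma aux_finrank_ker (a : E → (M →ₗ[ℝ] ℝ)) (r : E → ℝ)
    (hspan : Submodule.span ℝ (Set.range a) = ⊤) (F : Set E) (R : Set M)
    (hR : IsFace a r F R) :
    Module.finrank ℝ (LinearMap.ker (PhibarFR a r F R)) =
      Module.finrank ℝ ((M →ₗ[ℝ] ℝ) ⧸ auxA a r F R) := by
  refine LinearEquiv.finrank_eq (LinearEquiv.ofBijective
    ((auxG a r F R).domRestrict (LinearMap.ker (PhibarFR a r F R))) ⟨?_, ?_⟩)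
  · rw [injective_iff_map_eq_zero]
    rintro ⟨w, hw⟩ h
    exact Subtype.ext (aux_inj a r F R hR w hw h)
  · intro q
    obtain ⟨n, rfl⟩ := Submodule.mkQ_surjective _ q
    obtain ⟨x, rfl⟩ := aux_surj_toN a hspan n
    refine ⟨⟨Submodule.Quotient.mk (Submodule.Quotient.mk (x, -x)), ?_⟩, ?_⟩
    · simp [PhibarFR, Phibar, addMap]
    · simp [auxG, auxT1, auxT, addMap]

end

/-- Dimension formula of Theorem 6.1: `dim C^{(F,R)}_𝒻 = d + ℓ(𝒻) − codim R`, where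
`codim R = finrank (span {a_e : e ∈ F^0(R)})` and `ℓ(𝒻) = k`. -/
theorem Ccone_dim
    (a : E → (M →ₗ[ℝ] ℝ)) (r : E → ℝ)
    (ha : ∀ e, a e ≠ 0) (hspan : Submodule.span ℝ (Set.range a) = ⊤)
    (F : Set E) (hF : IsFlat a F) (R : Set M) (hR : IsFace a r F R)
    (k : ℕ) (flag : Fin (k + 1) → Set E)
    (hflat : ∀ i, IsFlat a (flag i)) (hmono : StrictMono flag)
    (h0 : flag 0 = F) (hlast : flag (Fin.last k) = Set.univ) :
    Module.finrank ℝ (Submodule.span ℝ (Ccone a r F R k flag)) =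
      Module.finrank ℝ M + k -
        Module.finrank ℝ (Submodule.span ℝ (a '' zeroSet a r F R)) := by


  have hspanC : Submodule.span ℝ (Ccone a r F R k flag) =
      (Submodule.span ℝ ((RF E F).mkQ '' bergCone k flag)).comap (PhibarFR a r F R) := by
    refine Submodule.span_preimage_eq ?_ ?_
    · exact Set.Nonempty.image _ ⟨0, 0, rfl, by simp, by simp⟩
    · intro x _
      exact aux_surj_Phi a r F R x
  rw [hspanC, aux_finrank_comap _ (aux_surj_Phi a r F R), aux_finrank_berg F k flag hmono h0,
    aux_finrank_ker a r hspan F R hR]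
  have h1 := Submodule.finrank_quotient_add_finrank (auxA a r F R)
  have h2 : Module.finrank ℝ (M →ₗ[ℝ] ℝ) = Module.finrank ℝ M := Subspace.dual_finrank_eq
  rw [h2] at h1
  change _ = _ - Module.finrank ℝ (auxA a r F R)
  omega
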